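/- Let m ≥ 3 and n ≥ m. A monomial prime P ⊆ K[x_1,...,x_n] is an associated prime of (I(H)^∨)^2 for some m-hypergraph H of size n if and only if height(P) ≥ m. -/

import Mathlib

/-!
The ideal `J = dualIdeal K E` is monomial: a monomial `x^b` lies in `J` exactly when the support of
`b` meets every edge. So `x^a` lies in `J ^ 2` exactly when `a` dominates a sum of two such
exponents (`exists_add_of_mem_sq` is the direction that needs an argument).

If the prime `P_S` generated by the variables in `S` is associated to `J ^ 2`, it contains `J`, hence
it contains one of the finitely many edge primes whose intersection is `J`, so `S` contains an edge
and `m ≤ |S|`.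

Conversely, by `isAssociatedPrime_of_exponent` it is enough to find edges and an exponent `a` such
that `x^a` is not in `J ^ 2`, even after multiplication by variables outside `S`, whereas `x_i x^a`
is in `J ^ 2` for all `i ∈ S`. If `|S| = m`, take the single edge `S` and `a` a unit vector. If
`|S| > m`, take an odd cycle with vertices `u_j`, `j ∈ ZMod r`, and enlarge each edge
`{u_j, u_{j+1}}` of the cycle by a set `F_j` of `m - 2` further vertices to an edge of the
hypergraph. The exponent `a` is the indicator of the cycle. A decomposition of `a` would be a proper
2-colouring of an odd cycle; on the other hand an odd cycle has a 2-colouring in which one prescribed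
edge only is monochromatic, and an extra unit at any vertex of the corresponding edge of the
hypergraph repairs this. The set of vertices outside the cycle has `m - 2` or `m - 1` elements,
according to the parity of `|S| - m`; in the second case two different sets `F_j` cover it.
-/


open MvPolynomial Finset

noncomputable section

/-- A `k`-cover of a hypergraph with edge set `E`: a nonzero tuple whose entries
sum to at least `k` over every edge. -/
def IsCover {V : Type*} (E : Finset (Finset V)) (k : ℕ) (a : V → ℕ) : Prop :=
  a ≠ 0 ∧ ∀ e ∈ E, k ≤ ∑ i ∈ e, a i

/-- `a` is a sum of two 1-covers. -/
def SumTwoOneCovers {V : Type*} (E : Finset (Finset V)) (a : V → ℕ) : Prop :=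
  ∃ b c : V → ℕ, IsCover E 1 b ∧ IsCover E 1 c ∧ a = b + c

/-- An independent set: no edge is contained in `S`. -/
def IsIndep {V : Type*} (E : Finset (Finset V)) (S : Finset V) : Prop :=
  ∀ e ∈ E, ¬ e ⊆ S

/-- `i` is in the neighborhood of `S`: `i ∉ S` and some edge consists of `i`
together with vertices of `S`. -/
def InNbhd {V : Type*} (E : Finset (Finset V)) (S : Finset V) (i : V) : Prop :=
  i ∉ S ∧ ∃ e ∈ E, i ∈ e ∧ ∀ j ∈ e, j ≠ i → j ∈ S

open Classical in
/-- The 2-cover `A_S` attached to an independent set `S`: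
`0` on `S`, `2` on `N(S)`, and `1` elsewhere. -/
noncomputable def indepCover {V : Type*} (E : Finset (Finset V)) (S : Finset V) : V → ℕ :=
  fun i => if i ∈ S then 0 else if InNbhd E S i then 2 else 1

/-- The Alexander dual of the edge ideal: `⋂_{edges e} (x_i : i ∈ e)`. -/
noncomputable def dualIdeal {V : Type*} (K : Type*) [Field K] (E : Finset (Finset V)) :
    Ideal (MvPolynomial V K) :=
  ⨅ e ∈ E, Ideal.span (X '' (e : Set V))

/-- The monomial `x_1^{a_1} ⋯ x_n^{a_n}` attached to a tuple `a`. -/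
noncomputable def coverMonomial {V : Type*} [Fintype V] (K : Type*) [Field K] (a : V → ℕ) :
    MvPolynomial V K :=
  ∏ i, X i ^ a i

/-- Connectedness of a hypergraph: any two vertices are linked by a chain of
vertices in which consecutive vertices share an edge. -/
def HConnected {V : Type*} (E : Finset (Finset V)) : Prop :=
  ∀ x y : V, ∃ l : List V, l.head? = some x ∧ l.getLast? = some y ∧
    l.Chain' fun a b => ∃ e ∈ E, a ∈ e ∧ b ∈ e

/-- The cyclic 3-hypergraph with edges `{x_1,x_2,x_3}, {x_3,x_4,x_5}, …`
(0-based: `{2j, 2j+1, 2j+2}` modulo `n`). -/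
def cyc3 (n : ℕ) (hn : 0 < n) : Finset (Finset (Fin n)) :=
  (Finset.range ((n + 1) / 2)).image fun j =>
    ({⟨(2 * j) % n, Nat.mod_lt _ hn⟩, ⟨(2 * j + 1) % n, Nat.mod_lt _ hn⟩,
      ⟨(2 * j + 2) % n, Nat.mod_lt _ hn⟩} : Finset (Fin n))

/-- The alternating tuple: `1` on odd vertices `x_1, x_3, …` (0-based even
indices), `0` on even vertices. -/
def altCover (n : ℕ) : Fin n → ℕ :=
  fun i => if (i : ℕ) % 2 = 0 then 1 else 0

/-! ### Monomials in the dual ideal and in its square -/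

/-- The exponent `b` has a positive entry on every edge, that is, `x^b` lies in the dual ideal. -/
def Meets {V : Type*} (E : Finset (Finset V)) (b : V → ℕ) : Prop :=
  ∀ e ∈ E, ∃ i ∈ e, b i ≠ 0

theorem mem_dualIdeal_iff {V K : Type*} [Field K] (E : Finset (Finset V))
    (f : MvPolynomial V K) :
    f ∈ dualIdeal K E ↔ ∀ d ∈ f.support, Meets E d := by
  simp only [dualIdeal, Ideal.mem_iInf, mem_ideal_span_X_image, Meets, Finset.mem_coe]
  exact ⟨fun h d hd e he => h e he d hd, fun h e he d hd => h d hd e he⟩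

theorem exists_add_of_mem_sq {V K : Type*} [Field K] (E : Finset (Finset V))
    (f : MvPolynomial V K) (hf : f ∈ dualIdeal K E ^ 2) :
    ∀ d ∈ f.support, ∃ b c : V →₀ ℕ, Meets E b ∧ Meets E c ∧ d = b + c := by
  classical
  rw [pow_two] at hf
  refine Submodule.mul_induction_on hf ?_ ?_
  · intro p hp q hq d hd
    rw [mem_dualIdeal_iff] at hp hq
    obtain ⟨b, hb, c, hc, rfl⟩ := Finset.mem_add.1 (support_mul p q hd)
    exact ⟨b, c, hp b hb, hq c hc, rfl⟩
  · intro p q hp hq d hd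
    rcases Finset.mem_union.1 (support_add hd) with h | h
    · exact hp d h
    · exact hq d h

/-! ### Monomial primes as colon ideals -/

theorem isPrime_span_X {V K : Type*} [Field K] (S : Set V) :
    (Ideal.span (X '' S) : Ideal (MvPolynomial V K)).IsPrime := by
  classical
  -- The ideal is the kernel of the substitution that sets the variables in `S` to zero.
  let φ : MvPolynomial V K →ₐ[K] MvPolynomial V K := aeval fun i => if i ∈ S then 0 else X i
  have hφ : (Ideal.span (X '' S) : Ideal (MvPolynomial V K)) = RingHom.ker φ := by
    apply le_antisymm
    · rw [Ideal.span_le]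
      rintro _ ⟨i, hi, rfl⟩
      simp [φ, RingHom.mem_ker, hi]
    · intro f hf
      have h : (Ideal.Quotient.mkₐ K (Ideal.span (X '' S))).comp φ
          = Ideal.Quotient.mkₐ K (Ideal.span (X '' S)) := by
        apply MvPolynomial.algHom_ext
        intro i
        by_cases hi : i ∈ S
        · have : (X i : MvPolynomial V K) ∈ Ideal.span (X '' S) :=
            Ideal.subset_span ⟨i, hi, rfl⟩
          simpa [φ, hi] using (Ideal.Quotient.eq_zero_iff_mem.2 this).symm
        · simp [φ, hi]
      have h2 := DFunLike.congr_fun h f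
      have h3 : φ f = 0 := hf
      rw [AlgHom.comp_apply, h3, map_zero] at h2
      exact Ideal.Quotient.eq_zero_iff_mem.1 h2.symm
  rw [hφ]
  exact RingHom.ker_isPrime _

/-- If `x_i x^a` is a product of two monomials of the dual ideal for every `i ∈ S`, and no multiple
of `x^a` by a monomial in the variables outside `S` is such a product, then
`(J ^ 2 : x^a)` is the prime generated by the variables in `S`. -/
theorem isAssociatedPrime_of_exponent {K : Type*} [Field K] {n : ℕ} (E : Finset (Finset (Fin n)))
    (S : Finset (Fin n)) (a : Fin n → ℕ)
    (h1 : ∀ i ∈ S, ∃ b c : Fin n → ℕ, Meets E b ∧ Meets E c ∧ a + Pi.single i 1 = b + c)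
    (h2 : ∀ d b c : Fin n → ℕ, (∀ i ∈ S, d i = 0) → Meets E b → Meets E c → a + d ≠ b + c) :
    IsAssociatedPrime
      (Ideal.span (X '' (S : Set (Fin n))) : Ideal (MvPolynomial (Fin n) K))
      (MvPolynomial (Fin n) K ⧸ ((dualIdeal K E) ^ 2)) := by
  rw [isAssociatedPrime_iff]
  refine ⟨isPrime_span_X _, Ideal.Quotient.mk _ (monomial (Finsupp.equivFunOnFinite.symm a) 1), ?_⟩
  have hmem : ∀ f : MvPolynomial (Fin n) K,
      f ∈ Submodule.colon (⊥ : Submodule (MvPolynomial (Fin n) K)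
        (MvPolynomial (Fin n) K ⧸ ((dualIdeal K E) ^ 2)))
        {Ideal.Quotient.mk _ (monomial (Finsupp.equivFunOnFinite.symm a) 1)} ↔
      f * monomial (Finsupp.equivFunOnFinite.symm a) 1 ∈ dualIdeal K E ^ 2 := by
    intro f
    rw [Submodule.mem_colon_singleton, Submodule.mem_bot, Algebra.smul_def,
      Ideal.Quotient.algebraMap_eq, ← map_mul, Ideal.Quotient.eq_zero_iff_mem]
  apply le_antisymm
  · rw [Ideal.span_le]
    rintro _ ⟨i, hi, rfl⟩
    rw [SetLike.mem_coe, hmem]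
    obtain ⟨b, c, hb, hc, habc⟩ := h1 i hi
    have hJ : ∀ b : Fin n → ℕ, Meets E b →
        (monomial (Finsupp.equivFunOnFinite.symm b) (1 : K)) ∈ dualIdeal K E := by
      intro b hb
      rw [mem_dualIdeal_iff]
      intro d hd
      have := Finset.mem_singleton.1 (support_monomial_subset hd)
      subst this
      exact hb
    have : (X i : MvPolynomial (Fin n) K) * monomial (Finsupp.equivFunOnFinite.symm a) 1
        = monomial (Finsupp.equivFunOnFinite.symm b) 1
          * monomial (Finsupp.equivFunOnFinite.symm c) 1 := by
      have hexp : Finsupp.single i 1 + Finsupp.equivFunOnFinite.symm a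
          = Finsupp.equivFunOnFinite.symm b + Finsupp.equivFunOnFinite.symm c := by
        ext k
        have := congrFun habc k
        simp only [Pi.add_apply, Pi.single_apply] at this
        simp only [Finsupp.add_apply, Finsupp.single_apply,
          Finsupp.equivFunOnFinite_symm_apply_apply]
        rw [← this, add_comm]
        simp [eq_comm]
      rw [X, monomial_mul, monomial_mul, hexp]
    rw [this, pow_two]
    exact Ideal.mul_mem_mul (hJ b hb) (hJ c hc)
  · intro f hf
    rw [hmem] at hf
    rw [mem_ideal_span_X_image]
    intro d hd
    by_contra! hcon
    obtain ⟨b, c, hb, hc, habc⟩ := exists_add_of_mem_sq E _ hf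
      (d + Finsupp.equivFunOnFinite.symm a) (by
        rw [mem_support_iff, coeff_mul_monomial, mul_one]
        exact mem_support_iff.1 hd)
    refine h2 d b c hcon hb hc ?_
    funext k
    have := DFunLike.congr_fun habc k
    simpa [add_comm] using this

/-! ### Hypergraphs on an odd cycle -/

/-- The hypergraph whose edges extend the edges of an odd cycle `u` by the sets `F j`. -/
def cycleEdges {V : Type*} [DecidableEq V] (r : ℕ) [NeZero r] (u : ZMod r → V)
    (F : ZMod r → Finset V) : Finset (Finset V) :=
  Finset.univ.image fun j => insert (u j) (insert (u (j + 1)) (F j))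

/-- The exponent which is the indicator of the cycle `u` realises, as an associated prime, the set
`S` of all vertices that lie in an edge. -/
theorem isAssociatedPrime_cycleEdges {K : Type*} [Field K] {n : ℕ} (S : Finset (Fin n))
    (r : ℕ) [NeZero r] (hr1 : 1 < r) (hr : Odd r) (u : ZMod r → Fin n) (hu : Function.Injective u)
    (F : ZMod r → Finset (Fin n)) (huF : ∀ i j, u i ∉ F j)
    (hS : ∀ i, i ∈ S ↔ ∃ j, i ∈ insert (u j) (insert (u (j + 1)) (F j))) :
    IsAssociatedPrime
      (Ideal.span (X '' (S : Set (Fin n))) : Ideal (MvPolynomial (Fin n) K))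
      (MvPolynomial (Fin n) K ⧸ ((dualIdeal K (cycleEdges r u F)) ^ 2)) := by
  classical
  have : Fact (1 < r) := ⟨hr1⟩
  have hmeets : ∀ b : Fin n → ℕ, Meets (cycleEdges r u F) b ↔
      ∀ j, b (u j) ≠ 0 ∨ b (u (j + 1)) ≠ 0 ∨ ∃ i ∈ F j, b i ≠ 0 := by
    intro b
    simp [Meets, cycleEdges]
  refine isAssociatedPrime_of_exponent _ S (fun v => if ∃ j, u j = v then 1 else 0) ?_ ?_
  · intro i hi
    obtain ⟨j₀, hj₀⟩ := (hS i).1 hi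
    -- Colour the cycle alternately, starting at `j₀ + 1`: only the edge at `j₀` is monochromatic.
    let par : ZMod r → Prop := fun j => Even (j - (j₀ + 1)).val
    have hpar : ∀ j, j ≠ j₀ → (par (j + 1) ↔ ¬ par j) := by
      intro j hj
      have hlt : (j - (j₀ + 1)).val + 1 < r := by
        rcases Nat.lt_or_ge ((j - (j₀ + 1)).val + 1) r with h | h
        · exact h
        · exfalso
          have h1 := ZMod.val_lt (j - (j₀ + 1))
          have h2 : (j - (j₀ + 1)).val + 1 = r := by omega
          have h3 : (((j - (j₀ + 1)).val + 1 : ℕ) : ZMod r) = 0 := by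
            rw [h2]; exact ZMod.natCast_self r
          rw [Nat.cast_add, ZMod.natCast_zmod_val, Nat.cast_one] at h3
          apply hj
          linear_combination h3
      have h1 : (j + 1 - (j₀ + 1)).val = (j - (j₀ + 1)).val + 1 := by
        rw [show j + 1 - (j₀ + 1) = (j - (j₀ + 1)) + 1 by ring,
          ZMod.val_add_of_lt (by rwa [ZMod.val_one]), ZMod.val_one]
      simp only [par, h1, Nat.even_add_one]
    have hpar0 : par (j₀ + 1) := by simp [par]
    refine ⟨fun v => if ∃ j, u j = v ∧ par j then 1 else 0,
      (fun v => if ∃ j, u j = v ∧ ¬ par j then 1 else 0) + Pi.single i 1, ?_, ?_, ?_⟩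
    · rw [hmeets]
      intro j
      have key : par j ∨ par (j + 1) := by
        by_cases hj : j = j₀
        · subst hj; exact Or.inr hpar0
        · have := hpar j hj; tauto
      rcases key with h | h
      · left
        rw [if_pos ⟨j, rfl, h⟩]; exact one_ne_zero
      · right; left
        rw [if_pos ⟨j + 1, rfl, h⟩]; exact one_ne_zero
    · rw [hmeets]
      intro j
      by_cases hj : j = j₀
      · subst hj
        simp only [Finset.mem_insert] at hj₀
        rcases hj₀ with h | h | h
        · left; simp [h]
        · right; left; simp [h]
        · right; right; exact ⟨i, h, by simp⟩
      · have := hpar j hj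
        by_cases h : par j
        · right; left
          simp only [Pi.add_apply]
          rw [if_pos ⟨j + 1, rfl, by tauto⟩]; omega
        · left
          simp only [Pi.add_apply]
          rw [if_pos ⟨j, rfl, h⟩]; omega
    · rw [← add_assoc]
      congr 1
      funext v
      by_cases hv : ∃ j, u j = v
      · obtain ⟨j, rfl⟩ := hv
        by_cases h : par j <;> simp [hu.eq_iff, h]
      · have h1 : ¬ ∃ j, u j = v ∧ par j := fun ⟨j, h, _⟩ => hv ⟨j, h⟩
        have h2 : ¬ ∃ j, u j = v ∧ ¬ par j := fun ⟨j, h, _⟩ => hv ⟨j, h⟩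
        simp only [Pi.add_apply, if_neg hv, if_neg h1, if_neg h2]
  · intro d b c hd hb hc heq
    rw [hmeets] at hb hc
    have hU : ∀ j, b (u j) + c (u j) = 1 := by
      intro j
      have h := congrFun heq (u j)
      have hd' := hd (u j) ((hS _).2 ⟨j, by simp⟩)
      simp only [Pi.add_apply, hd', if_pos (⟨j, rfl⟩ : ∃ k, u k = u j)] at h
      omega
    have hF : ∀ j, ∀ i ∈ F j, b i = 0 ∧ c i = 0 := by
      intro j i hi
      have h := congrFun heq i
      have hd' := hd i ((hS _).2 ⟨j, by simp [hi]⟩)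
      have hn : ¬ ∃ k, u k = i := by
        rintro ⟨k, rfl⟩; exact huF k j hi
      simp only [Pi.add_apply, hd', if_neg hn] at h
      omega
    have hstep : ∀ j, b (u j) + b (u (j + 1)) = 1 := by
      intro j
      have h1 : b (u j) ≠ 0 ∨ b (u (j + 1)) ≠ 0 := by
        rcases hb j with h | h | ⟨i, hi, h⟩
        · exact Or.inl h
        · exact Or.inr h
        · exact absurd (hF j i hi).1 h
      have h2 : c (u j) ≠ 0 ∨ c (u (j + 1)) ≠ 0 := by
        rcases hc j with h | h | ⟨i, hi, h⟩
        · exact Or.inl h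
        · exact Or.inr h
        · exact absurd (hF j i hi).2 h
      have h3 := hU j
      have h4 := hU (j + 1)
      omega
    -- Along the cycle the values of `b` alternate, which is impossible after an odd number of steps.
    have halt : ∀ k : ℕ, (b (u (k : ZMod r)) + k + b (u 0)) % 2 = 0 := by
      intro k
      induction k with
      | zero => simp; omega
      | succ k ih =>
        have := hstep (k : ZMod r)
        push_cast
        omega
    have h1 := halt r
    rw [ZMod.natCast_self] at h1
    obtain ⟨k, hk⟩ := hr
    omega

/-! ### Realising every size of at least `m` -/

theorem isAssociatedPrime_singleton {K : Type*} [Field K] {n : ℕ} (S : Finset (Fin n)) (hS : S.Nonempty) :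
    IsAssociatedPrime
      (Ideal.span (X '' (S : Set (Fin n))) : Ideal (MvPolynomial (Fin n) K))
      (MvPolynomial (Fin n) K ⧸ ((dualIdeal K {S}) ^ 2)) := by
  obtain ⟨i₀, hi₀⟩ := hS
  refine isAssociatedPrime_of_exponent {S} S (Pi.single i₀ 1) ?_ ?_
  · intro i hi
    refine ⟨Pi.single i₀ 1, Pi.single i 1, ?_, ?_, rfl⟩
    · simpa [Meets] using ⟨i₀, hi₀, by simp⟩
    · simpa [Meets] using ⟨i, hi, by simp⟩
  · intro d b c hd hb hc heq
    obtain ⟨i, hi, hbi⟩ := hb S (Finset.mem_singleton_self S)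
    obtain ⟨j, hj, hcj⟩ := hc S (Finset.mem_singleton_self S)
    have key : ∀ k ∈ S, b k + c k = if k = i₀ then 1 else 0 := by
      intro k hk
      have := congrFun heq k
      simp only [Pi.add_apply, hd k hk, Pi.single_apply] at this
      omega
    have h1 := key i hi
    have h2 := key j hj
    have hii : i = i₀ := by by_contra h; rw [if_neg h] at h1; omega
    have hjj : j = i₀ := by by_contra h; rw [if_neg h] at h2; omega
    subst hii hjj
    simp at h1
    omega

/-- A set `T ⊆ S` and two subsets of size `m - 2` that cover it yield a suitable hypergraph as soon as
the complement of `T` in `S` has odd size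
greater than one. -/
theorem exists_of_cover {K : Type*} [Field K] {n m : ℕ} (hm : 3 ≤ m) (S T F₀ F₁ : Finset (Fin n))
    (hT : T ⊆ S) (hF : F₀ ∪ F₁ = T) (h₀ : F₀.card = m - 2) (h₁ : F₁.card = m - 2)
    (hr1 : 1 < (S \ T).card) (hr : Odd (S \ T).card) :
    ∃ E : Finset (Finset (Fin n)), (∀ e ∈ E, e.card = m) ∧
        IsAssociatedPrime
          (Ideal.span (X '' (S : Set (Fin n))) : Ideal (MvPolynomial (Fin n) K))
          (MvPolynomial (Fin n) K ⧸ ((dualIdeal K E) ^ 2)) := by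
  generalize hrr : (S \ T).card = r at hr hr1
  have : NeZero r := ⟨by omega⟩
  have : Fact (1 < r) := ⟨hr1⟩
  have φ : ZMod r ≃ {x // x ∈ S \ T} := Fintype.equivOfCardEq (by rw [ZMod.card, Fintype.card_coe, hrr])
  let u : ZMod r → Fin n := fun j => φ j
  have hu : Function.Injective u := fun i j h => φ.injective (Subtype.ext h)
  have huS : ∀ j, u j ∈ S ∧ u j ∉ T := fun j => Finset.mem_sdiff.1 (φ j).2
  let F : ZMod r → Finset (Fin n) := fun j => if j = 0 then F₀ else F₁
  have hFT : ∀ j, F j ⊆ T := by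
    intro j
    by_cases h : j = 0
    · simp only [F, if_pos h, ← hF]; exact Finset.subset_union_left
    · simp only [F, if_neg h, ← hF]; exact Finset.subset_union_right
  have huF : ∀ i j, u i ∉ F j := fun i j h => (huS i).2 (hFT j h)
  refine ⟨cycleEdges r u F, ?_, isAssociatedPrime_cycleEdges S r hr1 hr u hu F huF ?_⟩
  · intro e he
    obtain ⟨j, -, rfl⟩ := Finset.mem_image.1 he
    have hne : u j ≠ u (j + 1) := by
      intro h
      have := hu h
      simp at this
    have hc : (F j).card = m - 2 := by
      by_cases h : j = 0 <;> simp [F, h, h₀, h₁]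
    rw [Finset.card_insert_of_notMem (by simp [hne, huF]),
      Finset.card_insert_of_notMem (huF _ _), hc]
    omega
  · intro i
    constructor
    · intro hi
      by_cases hiT : i ∈ T
      · rw [← hF, Finset.mem_union] at hiT
        rcases hiT with h | h
        · exact ⟨0, by simp [F, h]⟩
        · exact ⟨1, by simp [F, h]⟩
      · obtain ⟨j, hj⟩ := φ.surjective ⟨i, Finset.mem_sdiff.2 ⟨hi, hiT⟩⟩
        exact ⟨j, by simp [u, hj]⟩
    · rintro ⟨j, hj⟩
      simp only [Finset.mem_insert] at hj
      rcases hj with rfl | rfl | h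
      · exact (huS _).1
      · exact (huS _).1
      · exact hT (hFT j h)

theorem stmt17 {K : Type*} [Field K] {n m : ℕ} (hm : 3 ≤ m) (hn : m ≤ n)
    (S : Finset (Fin n)) :
    (∃ E : Finset (Finset (Fin n)), (∀ e ∈ E, e.card = m) ∧
        IsAssociatedPrime
          (Ideal.span (X '' (S : Set (Fin n))) : Ideal (MvPolynomial (Fin n) K))
          (MvPolynomial (Fin n) K ⧸ ((dualIdeal K E) ^ 2))) ↔
      m ≤ S.card := by
  constructor
  · rintro ⟨E, hE, hass⟩
    have hprime := hass.isPrime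
    have hle : dualIdeal K E ^ 2 ≤ Ideal.span (X '' (S : Set (Fin n))) := by
      have := hass.annihilator_le
      rwa [Submodule.annihilator_top, Ideal.annihilator_quotient] at this
    have hle1 : dualIdeal K E ≤ Ideal.span (X '' (S : Set (Fin n))) :=
      hprime.le_of_pow_le hle
    rw [dualIdeal, ← Finset.inf_eq_iInf, Ideal.IsPrime.inf_le' hprime] at hle1
    obtain ⟨e, he, hes⟩ := hle1
    rw [← hE e he]
    apply Finset.card_le_card
    intro i hi
    have h := hes (Ideal.subset_span ⟨i, hi, rfl⟩)
    rw [mem_ideal_span_X_image] at h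
    obtain ⟨k, hk, hki⟩ := h (Finsupp.single i 1) (by simp [X, mem_support_iff])
    rw [Finsupp.single_apply_ne_zero] at hki
    rw [← hki.1]
    exact hk
  · intro hS
    rcases hS.eq_or_lt with h | h
    · exact ⟨{S}, by simp [h], isAssociatedPrime_singleton S (Finset.card_pos.1 (by omega))⟩
    rcases Nat.even_or_odd (S.card - m) with hpar | hpar
    · obtain ⟨T, hTS, hT⟩ := Finset.exists_subset_card_eq (s := S) (n := m - 1) (by omega)
      obtain ⟨p, hp, q, hq, hpq⟩ := Finset.one_lt_card.1 (show 1 < T.card by omega)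
      have hcard : (S \ T).card = S.card - m + 1 := by
        rw [Finset.card_sdiff_of_subset hTS, hT]; omega
      refine exists_of_cover hm S T (T.erase p) (T.erase q) hTS ?_ ?_ ?_ ?_ ?_
      · ext x
        simp only [Finset.mem_union, Finset.mem_erase]
        by_cases hx : x = p
        · subst hx; simp [hpq]
        · tauto
      · rw [Finset.card_erase_of_mem hp, hT]; omega
      · rw [Finset.card_erase_of_mem hq, hT]; omega
      · omega
      · rw [hcard]; exact hpar.add_one
    · obtain ⟨T, hTS, hT⟩ := Finset.exists_subset_card_eq (s := S) (n := m - 2) (by omega)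
      have hcard : (S \ T).card = S.card - m + 2 := by
        rw [Finset.card_sdiff_of_subset hTS, hT]; omega
      refine exists_of_cover hm S T T T hTS (Finset.union_self T) hT hT (by omega) ?_
      rw [hcard]
      exact hpar.add_even even_two
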